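/- Let N ∈ ℕ, let α > 0, and let w be a random vector in ℝ^N whose components are independent, each distributed according to the centered Cauchy distribution with scale α⁻¹. Then for every v ∈ ℝ^N, the expectation of cos(⟨w, v⟩) equals exp(−‖v‖₁/α), where ‖v‖₁ = Σ_{k=1}^N |v_k| is the ℓ¹ norm; i.e., ∫ cos(⟨w,v⟩) dP(w) = exp(−‖v‖₁/α). -/

import Mathlib

open MeasureTheory

/-- The centered Cauchy distribution with scale parameter `γ`: the measure on `ℝ`
with density `s ↦ γ/(π(s² + γ²))` with respect to Lebesgue measure. -/
noncomputable def cauchyMeasure (γ : ℝ) : Measure ℝ :=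
  volume.withDensity fun s => ENNReal.ofReal (γ / (Real.pi * (s ^ 2 + γ ^ 2)))

/-!
Up to scaling, the Cauchy density is the Fourier transform of `x ↦ exp (-c * |x| + b * x)`
with `c > 0` real and `b` purely imaginary (`b` shifts the location), which is computed by
splitting at the origin. Both functions are integrable, so Fourier inversion gives the
characteristic function of the Cauchy distribution. Independence multiplies the characteristic
functions of the components, and the expected cosine is the real part of the product.
-/

open Set Complex WithLp
open ProbabilityTheory (cauchyPDF cauchyPDFReal cauchyPDF_pos integrable_cauchyPDFReal
  cauchyMeasure_of_scale_ne_zero)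
open scoped FourierTransform RealInnerProductSpace NNReal

section TwoSidedExponential

lemma eqOn_cexp_neg_mul_abs_add_mul_Ioi (a b : ℂ) :
    EqOn (fun x : ℝ ↦ cexp (-a * |x| + b * x)) (fun x : ℝ ↦ cexp ((b - a) * x)) (Ioi 0) := by
  intro x hx
  simp only [abs_of_pos (mem_Ioi.mp hx)]
  ring_nf

lemma eqOn_cexp_neg_mul_abs_add_mul_Iic (a b : ℂ) :
    EqOn (fun x : ℝ ↦ cexp (-a * |x| + b * x)) (fun x : ℝ ↦ cexp ((a + b) * x)) (Iic 0) := by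
  intro x hx
  simp only [abs_of_nonpos (mem_Iic.mp hx), ofReal_neg]
  ring_nf

variable {a b : ℂ}

lemma integrable_cexp_neg_mul_abs_add_mul (hab : |b.re| < a.re) :
    Integrable fun x : ℝ ↦ cexp (-a * |x| + b * x) := by
  obtain ⟨hneg, hpos⟩ := abs_lt.mp hab
  rw [← integrableOn_univ, ← Iic_union_Ioi (a := (0 : ℝ)), integrableOn_union,
    integrableOn_congr_fun (eqOn_cexp_neg_mul_abs_add_mul_Iic a b) measurableSet_Iic,
    integrableOn_congr_fun (eqOn_cexp_neg_mul_abs_add_mul_Ioi a b) measurableSet_Ioi]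
  exact ⟨integrableOn_exp_mul_complex_Iic (by rw [add_re]; linarith) 0,
    integrableOn_exp_mul_complex_Ioi (by rw [sub_re]; linarith) 0⟩

lemma integral_cexp_neg_mul_abs_add_mul (hab : |b.re| < a.re) :
    ∫ x : ℝ, cexp (-a * |x| + b * x) = 2 * a / (a ^ 2 - b ^ 2) := by
  obtain ⟨hneg, hpos⟩ := abs_lt.mp hab
  have hint := integrable_cexp_neg_mul_abs_add_mul hab
  have hadd : 0 < (a + b).re := by rw [add_re]; linarith
  have hsub : (b - a).re < 0 := by rw [sub_re]; linarith
  have hadd_ne : a + b ≠ 0 := fun h ↦ by simp [h] at hadd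
  have hsub_ne : b - a ≠ 0 := fun h ↦ by simp [h] at hsub
  calc ∫ x : ℝ, cexp (-a * |x| + b * x)
      = (∫ x : ℝ in Iic 0, cexp ((a + b) * x)) + ∫ x : ℝ in Ioi 0, cexp ((b - a) * x) := by
        rw [← setIntegral_congr_fun measurableSet_Iic (eqOn_cexp_neg_mul_abs_add_mul_Iic a b),
          ← setIntegral_congr_fun measurableSet_Ioi (eqOn_cexp_neg_mul_abs_add_mul_Ioi a b),
          intervalIntegral.integral_Iic_add_Ioi hint.integrableOn hint.integrableOn]
    _ = 1 / (a + b) - 1 / (b - a) := by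
        rw [integral_exp_mul_complex_Iic hadd, integral_exp_mul_complex_Ioi hsub]
        simp [neg_div, sub_eq_add_neg]
    _ = 2 * a / (a ^ 2 - b ^ 2) := by
        rw [show a ^ 2 - b ^ 2 = -((a + b) * (b - a)) by ring]
        field_simp
        ring

lemma fourier_cexp_neg_mul_abs_add_mul (hab : |b.re| < a.re) (ξ : ℝ) :
    𝓕 (fun x : ℝ ↦ cexp (-a * |x| + b * x)) ξ
      = 2 * a / (a ^ 2 - (b - 2 * Real.pi * ξ * I) ^ 2) := by
  rw [Real.fourier_real_eq_integral_exp_smul, ← integral_cexp_neg_mul_abs_add_mul (by simpa)]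
  congr with x
  rw [smul_eq_mul, ← Complex.exp_add]
  push_cast
  ring_nf

end TwoSidedExponential

section CharFun

variable {E : Type*} [NormedAddCommGroup E] [InnerProductSpace ℝ E] [MeasurableSpace E]
  [BorelSpace E]

lemma charFun_withDensity_ofReal [FiniteDimensional ℝ E] {f : E → ℝ}
    (hf : AEMeasurable f) (hf_nonneg : 0 ≤ᵐ[volume] f) (t : E) :
    charFun (volume.withDensity fun x ↦ ENNReal.ofReal (f x)) t
      = 𝓕⁻ (fun x ↦ (f x : ℂ)) ((2 * Real.pi)⁻¹ • t) := by
  rw [charFun_apply, integral_withDensity_eq_integral_toReal_smul₀ hf.ennreal_ofReal (by simp),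
    Real.fourierInv_eq']
  refine integral_congr_ae (hf_nonneg.mono fun x hx ↦ ?_)
  have hphase : 2 * Real.pi * ⟪x, (2 * Real.pi)⁻¹ • t⟫ = ⟪x, t⟫ := by
    rw [real_inner_smul_right, mul_inv_cancel_left₀ Real.two_pi_pos.ne']
  simp only [ENNReal.toReal_ofReal hx, hphase, real_smul, smul_eq_mul]
  exact mul_comm _ _

lemma integral_cos_inner_eq_re_charFun [SecondCountableTopology E] (μ : Measure E)
    [IsFiniteMeasure μ] (t : E) : ∫ x, Real.cos ⟪x, t⟫ ∂μ = (charFun μ t).re := by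
  have hint : Integrable (fun x ↦ cexp (⟪x, t⟫ * I)) μ :=
    .of_bound (by fun_prop) 1 (ae_of_all μ fun x ↦ (norm_exp_ofReal_mul_I _).le)
  rw [charFun_apply, ← RCLike.re_to_complex, ← integral_re hint]
  simp only [RCLike.re_to_complex, exp_ofReal_mul_I_re]

end CharFun

section Cauchy

lemma fourier_cexp_eq_cauchyPDFReal (x₀ : ℝ) {γ : ℝ≥0} (hγ : γ ≠ 0) :
    𝓕 (fun x : ℝ ↦ cexp (-(2 * Real.pi * γ : ℝ) * |x| + (2 * Real.pi * x₀ : ℝ) * I * x))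
      = fun s ↦ (cauchyPDFReal x₀ γ s : ℂ) := by
  have hscale : 0 < 2 * Real.pi * (γ : ℝ) := by positivity
  ext s
  have hpdf : cauchyPDFReal x₀ γ s
      = 2 * (2 * Real.pi * γ) / ((2 * Real.pi * γ) ^ 2 + (2 * Real.pi * (s - x₀)) ^ 2) := by
    rw [ProbabilityTheory.cauchyPDFReal_def]
    field
  rw [fourier_cexp_neg_mul_abs_add_mul (by simpa using hscale), hpdf]
  push_cast
  congr 1
  linear_combination -(2 * Real.pi * (s - x₀) : ℂ) ^ 2 * I_sq

lemma charFun_cauchyMeasure (x₀ : ℝ) (γ : ℝ≥0) (t : ℝ) :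
    charFun (ProbabilityTheory.cauchyMeasure x₀ γ) t = cexp (t * x₀ * I - γ * |t|) := by
  obtain rfl | hγ := eq_or_ne γ 0
  · simp [charFun_dirac, mul_comm]
  have hscale : 0 < 2 * Real.pi * (γ : ℝ) := by positivity
  have hfourier := fourier_cexp_eq_cauchyPDFReal x₀ hγ
  have hinversion := Continuous.fourierInv_fourier_eq (by fun_prop)
    (integrable_cexp_neg_mul_abs_add_mul (by simpa using hscale))
    (hfourier ▸ (integrable_cauchyPDFReal x₀).ofReal)
  rw [cauchyMeasure_of_scale_ne_zero x₀ hγ]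
  unfold cauchyPDF
  rw [charFun_withDensity_ofReal (by fun_prop) (ae_of_all _ fun x ↦ (cauchyPDF_pos x₀ hγ x).le),
    ← hfourier, hinversion]
  simp only [smul_eq_mul, abs_mul, abs_of_pos (inv_pos.mpr Real.two_pi_pos)]
  push_cast
  field_simp
  ring_nf

lemma charFun_pi_cauchyMeasure {ι : Type*} [Fintype ι] (x₀ : ι → ℝ) (γ : ι → ℝ≥0)
    (t : EuclideanSpace ℝ ι) :
    charFun ((Measure.pi fun k ↦ ProbabilityTheory.cauchyMeasure (x₀ k) (γ k)).map (toLp 2)) t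
      = cexp ((∑ k, x₀ k * t k : ℝ) * I - (∑ k, γ k * |t k| : ℝ)) := by
  simp only [charFun_pi, charFun_cauchyMeasure, ← Complex.exp_sum, Finset.sum_sub_distrib,
    ← Finset.sum_mul, ofReal_sum, ofReal_mul, mul_comm (x₀ _ : ℂ)]

lemma cauchyMeasure_eq_cauchyMeasure_zero_toNNReal {γ : ℝ} (hγ : 0 < γ) :
    cauchyMeasure γ = ProbabilityTheory.cauchyMeasure 0 γ.toNNReal := by
  rw [cauchyMeasure_of_scale_ne_zero 0 (Real.toNNReal_pos.mpr hγ).ne', cauchyMeasure]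
  congr with s
  rw [cauchyPDF, ProbabilityTheory.cauchyPDFReal_def, Real.coe_toNNReal γ hγ.le]
  field_simp
  simp

end Cauchy

theorem integral_cos_cauchy_inner_general {ι : Type*} [Fintype ι] (x₀ : ι → ℝ) (γ : ι → ℝ≥0)
    (v : ι → ℝ) :
    ∫ w : ι → ℝ, Real.cos (∑ k, w k * v k)
        ∂(Measure.pi fun k ↦ ProbabilityTheory.cauchyMeasure (x₀ k) (γ k))
      = Real.cos (∑ k, x₀ k * v k) * Real.exp (-∑ k, γ k * |v k|) := by
  set μ := Measure.pi fun k ↦ ProbabilityTheory.cauchyMeasure (x₀ k) (γ k)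
  calc ∫ w, Real.cos (∑ k, w k * v k) ∂μ
      = ∫ x, Real.cos ⟪x, toLp 2 v⟫ ∂(μ.map (toLp 2)) := by
        rw [← MeasurableEquiv.coe_toLp, integral_map_equiv]
        simp [PiLp.inner_apply, mul_comm]
    _ = (charFun (μ.map (toLp 2)) (toLp 2 v)).re := integral_cos_inner_eq_re_charFun _ _
    _ = Real.cos (∑ k, x₀ k * v k) * Real.exp (-∑ k, γ k * |v k|) := by
        rw [charFun_pi_cauchyMeasure, sub_eq_add_neg, ← ofReal_neg, Complex.exp_add, ← ofReal_exp,
          re_mul_ofReal, exp_ofReal_mul_I_re]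

/-- Expected cosine of a Cauchy random projection: if `w ∈ ℝ^N` has independent
components each distributed as the centered Cauchy distribution with scale `α⁻¹`
(joint law the product measure), then for every `v ∈ ℝ^N`,
`E[cos(⟨w, v⟩)] = exp(−‖v‖₁/α)`. -/
theorem integral_cos_cauchy_inner (N : ℕ) (α : ℝ) (hα : 0 < α) (v : Fin N → ℝ) :
    ∫ w : Fin N → ℝ, Real.cos (∑ k, w k * v k)
        ∂(Measure.pi fun _ : Fin N => cauchyMeasure α⁻¹)
      = Real.exp (-(∑ k, |v k|) / α) := by
  simp [cauchyMeasure_eq_cauchyMeasure_zero_toNNReal (inv_pos.mpr hα),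
    integral_cos_cauchy_inner_general, hα.le, ← Finset.mul_sum, div_eq_inv_mul]
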